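/- Let p be a prime, K an algebraically closed field, d ≥ 1. Let V ⊆ (K^×)^d be a Zariski closed subset, i.e. V = {x ∈ (K^×)^d : f(x) = 0 for all f ∈ S} for some set S of polynomials in d variables over K, and let E ⊆ (K^×)^d be a subgroup. For j ∈ ℕ let a_j = |μ(p^j)^d ∩ V ∩ E| (a natural number). Then there exists an integer z ∈ ℤ such that the sequence (a_j), viewed in the p-adic integers ℤ_p, converges to z as j → ∞. -/

import Mathlib

open Filter
theorem lte_step (p m w : ℕ) (hm : 2 ≤ m) (hw : ¬ p ∣ w) :
    ∃ w', ¬ p ∣ w' ∧ (1 + p^m*w)^p = 1 + p^(m+1)*w' := by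
  obtain ⟨k, hk⟩ := Polynomial.powAddExpansion 1 (p^m*w) p
  obtain ⟨r, rfl⟩ := Nat.exists_eq_add_of_le hm
  refine ⟨w + p * (k * p^r * w^2), ?_, ?_⟩
  · rwa [Nat.dvd_add_left (dvd_mul_right _ _)]
  · rw [hk]; simp; ring

theorem lte (p m w : ℕ) (hm : 2 ≤ m) (hw : ¬ p ∣ w) (i : ℕ) :
    ∃ w', ¬ p ∣ w' ∧ (1 + p^m*w)^(p^i) = 1 + p^(m+i)*w' := by
  induction i with
  | zero => exact ⟨w, hw, by simp⟩
  | succ i ih =>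
    obtain ⟨w', h1, h2⟩ := ih
    obtain ⟨w'', h3, h4⟩ := lte_step p (m+i) w' (by omega) h1
    exact ⟨w'', h3, by rw [pow_succ, pow_mul, h2, h4]; rfl⟩

theorem card_tors_le {C D : Type*} [CommGroup C] [CommGroup D] [Finite C] [Finite D]
    (f : C →* D) (hf : Function.Surjective f) (q : ℕ) :
    Nat.card (powMonoidHom q : D →* D).ker ≤ Nat.card (powMonoidHom q : C →* C).ker := by
  have key : ∀ (X : Type _) [CommGroup X] [Finite X],
      Nat.card (powMonoidHom q : X →* X).ker = (powMonoidHom q : X →* X).range.index := by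
    intro X _ _
    have h1 := Subgroup.card_mul_index (powMonoidHom q : X →* X).ker
    have h2 := Subgroup.card_mul_index (powMonoidHom q : X →* X).range
    rw [Subgroup.index_ker] at h1
    have : 0 < Nat.card (powMonoidHom q : X →* X).range := Nat.card_pos
    rw [← h2, mul_comm] at h1
    exact Nat.eq_of_mul_eq_mul_left this h1
  have key' : ∀ (X : Type _) [CommGroup X] [Finite X],
      Nat.card (powMonoidHom q : X →* X).ker = (powMonoidHom q : X →* X).range.index := by
    intro X _ _
    have h1 := Subgroup.card_mul_index (powMonoidHom q : X →* X).ker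
    have h2 := Subgroup.card_mul_index (powMonoidHom q : X →* X).range
    rw [Subgroup.index_ker] at h1
    have : 0 < Nat.card (powMonoidHom q : X →* X).range := Nat.card_pos
    rw [← h2, mul_comm] at h1
    exact Nat.eq_of_mul_eq_mul_left this h1
  rw [key C, key' D]
  have : (powMonoidHom q : D →* D).range = (powMonoidHom q : C →* C).range.map f := by
    ext y; constructor
    · rintro ⟨z, rfl⟩
      obtain ⟨c, rfl⟩ := hf z
      exact ⟨c^q, ⟨c, rfl⟩, by simp⟩
    · rintro ⟨_, ⟨c, rfl⟩, rfl⟩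
      exact ⟨f c, by simp⟩
  rw [this]
  exact Nat.le_of_dvd (Nat.pos_of_ne_zero Subgroup.index_ne_zero_of_finite) (Subgroup.index_map_dvd _ hf)

/-- Quotients have finite torsion. -/
theorem quot_tors_finite {A : Type*} [CommGroup A] (p : ℕ)
    (hA : ∀ x : A, ∃ n : ℕ, x^(p^n) = 1) (hfin : ∀ n : ℕ, {x : A | x^(p^n) = 1}.Finite)
    (H : Subgroup A) (m : ℕ) : {b : A ⧸ H | b^(p^m) = 1}.Finite := by
  by_contra hinf
  obtain ⟨s, hs, hc⟩ := Set.Infinite.exists_subset_card_eq hinf ({x : A | x^(p^m) = 1}.ncard + 1)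
  have h1 : ∀ b : A ⧸ H, ∃ n : ℕ, ∃ x : A, x^(p^n) = 1 ∧ (x : A ⧸ H) = b := by
    intro b
    obtain ⟨x, rfl⟩ := QuotientGroup.mk_surjective b
    obtain ⟨n, hn⟩ := hA x
    exact ⟨n, x, hn, rfl⟩
  choose N X hX hXb using h1
  let j := s.sup N
  let Aj : Subgroup A := (powMonoidHom (p^j) : A →* A).ker
  have : Finite Aj := (hfin j).to_subtype
  let f := (QuotientGroup.mk' H).subgroupMap Aj
  have : Finite (Aj.map (QuotientGroup.mk' H)) := Finite.of_surjective f (MonoidHom.subgroupMap_surjective _ _)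
  have hle := card_tors_le f (MonoidHom.subgroupMap_surjective _ _) (p^m)
  have h2 : Nat.card (powMonoidHom (p^m) : Aj →* Aj).ker ≤ {x : A | x^(p^m) = 1}.ncard := by
    have : Finite {x : A | x^(p^m) = 1} := (hfin m).to_subtype
    rw [← Nat.card_coe_set_eq]
    refine Nat.card_le_card_of_injective (fun x => (⟨x.1.1, ?_⟩ : {x : A | x^(p^m) = 1})) ?_
    · have := x.2
      rw [MonoidHom.mem_ker] at this
      simpa using congrArg Subtype.val this
    · intro x y h
      exact Subtype.ext (Subtype.ext (congrArg (fun z => z.1) h))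
  have h3 : s.card ≤ Nat.card (powMonoidHom (p^m) : (Aj.map (QuotientGroup.mk' H)) →* _).ker := by
    have hXj : ∀ b ∈ s, X b ∈ Aj := by
      intro b hb
      obtain ⟨r, hr⟩ := Nat.exists_eq_add_of_le (Finset.le_sup (f := N) hb)
      change X b ^ (p^(s.sup N)) = 1
      rw [hr, pow_add, pow_mul, hX, one_pow]
    rw [← Nat.card_eq_finsetCard]
    refine Nat.card_le_card_of_injective (fun b : s => (⟨⟨b.1, ⟨X b.1, hXj b.1 b.2, hXb b.1⟩⟩, ?_⟩ : (powMonoidHom (p^m) : (Aj.map (QuotientGroup.mk' H)) →* _).ker)) ?_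
    · rw [MonoidHom.mem_ker]
      exact Subtype.ext (hs b.2)
    · intro x y h
      exact Subtype.ext (congrArg (fun z => z.1.1) h)
  omega
def IsCos {A : Type*} [CommGroup A] (C : Set A) : Prop :=
  C = ∅ ∨ ∃ (x : A) (H : Subgroup A), C = {y | x⁻¹ * y ∈ H}

def FinU {A : Type*} [CommGroup A] (Y : Set A) : Prop :=
  ∃ s : Finset (Set A), (∀ C ∈ s, IsCos C) ∧ Y = ⋃ C ∈ s, C

theorem IsCos.inter {A : Type*} [CommGroup A] {C D : Set A} (hC : IsCos C) (hD : IsCos D) :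
    IsCos (C ∩ D) := by
  rcases Set.eq_empty_or_nonempty (C ∩ D) with h | ⟨z, hzC, hzD⟩
  · exact Or.inl h
  have key : ∀ C : Set A, IsCos C → z ∈ C → ∃ H : Subgroup A, C = {y | z⁻¹ * y ∈ H} := by
    rintro C (rfl | ⟨x, H, rfl⟩) hz
    · exact absurd hz (by simp)
    · refine ⟨H, ?_⟩
      ext y
      have : x⁻¹ * y = (x⁻¹ * z) * (z⁻¹ * y) := by group
      simp only [Set.mem_ofPred_eq] at hz ⊢
      rw [this, H.mul_mem_cancel_left hz]
  obtain ⟨H1, h1⟩ := key C hC hzC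
  obtain ⟨H2, h2⟩ := key D hD hzD
  exact Or.inr ⟨z, H1 ⊓ H2, by rw [h1, h2]; rfl⟩

theorem FinU.iUnion {A : Type*} [CommGroup A] {s : Set (Set A)} (hs : s.Finite)
    (h : ∀ Y ∈ s, FinU Y) : FinU (⋃₀ s) := by
  classical
  choose! t ht hY using h
  refine ⟨hs.toFinset.biUnion t, ?_, ?_⟩
  · intro C hC
    simp only [Finset.mem_biUnion, Set.Finite.mem_toFinset] at hC
    obtain ⟨Y, h1, h2⟩ := hC
    exact ht Y h1 C h2
  · ext x
    simp only [Set.mem_sUnion, Set.mem_iUnion, Finset.mem_biUnion, Set.Finite.mem_toFinset, exists_prop]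
    constructor
    · rintro ⟨Y, h1, h2⟩
      have h3 := h2
      rw [hY Y h1] at h3
      simp only [Set.mem_iUnion, exists_prop] at h3
      obtain ⟨C, h4, h5⟩ := h3
      exact ⟨C, ⟨Y, h1, h4⟩, h5⟩
    · rintro ⟨C, ⟨Y, h1, h4⟩, h5⟩
      refine ⟨Y, h1, ?_⟩
      rw [hY Y h1]
      simp only [Set.mem_iUnion, exists_prop]
      exact ⟨C, h4, h5⟩

theorem FinU.of_isCos {A : Type*} [CommGroup A] {Y : Set A} (h : IsCos Y) : FinU Y :=
  ⟨{Y}, by simpa using h, by simp⟩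

def ConvZ (p : ℕ) [Fact p.Prime] (f : ℕ → ℕ) : Prop :=
  ∃ z : ℤ, Tendsto (fun j => (f j : ℤ_[p])) atTop (nhds ((z : ℤ_[p])))

theorem conv_subgroup {A : Type*} [CommGroup A] (p : ℕ) [hp : Fact p.Prime]
    (hfin : ∀ n : ℕ, {x : A | x^(p^n) = 1}.Finite) (H : Subgroup A) :
    ConvZ p (fun j => ({x : A | x^(p^j) = 1} ∩ H).ncard) := by
  let B : ℕ → Subgroup A := fun j => (powMonoidHom (p^j) : A →* A).ker ⊓ H
  have hB : ∀ j, ({x : A | x^(p^j) = 1} ∩ H) = (B j : Set A) := by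
    intro j; ext x; simp [B, MonoidHom.mem_ker]
  have hmem : ∀ j x, x ∈ B j ↔ x^(p^j) = 1 ∧ x ∈ H := by
    intro j x; simp [B, MonoidHom.mem_ker]
  have hBf : ∀ j, Finite (B j) := fun j => ((hfin j).subset (by intro x hx; exact ((hmem j x).1 hx).1)).to_subtype
  simp only [hB]
  have hmono : ∀ j, B j ≤ B (j+1) := by
    intro j x hx
    rw [hmem] at hx ⊢
    exact ⟨by rw [pow_succ, pow_mul, hx.1, one_pow], hx.2⟩
  by_cases h : ∃ j, B (j+1) = B j
  · obtain ⟨j, hj⟩ := h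
    have hall : ∀ k, B (j + k) = B j := by
      intro k
      induction k with
      | zero => rfl
      | succ k ih =>
        apply le_antisymm
        · rw [← hj]
          intro x hx
          rw [hmem] at hx ⊢
          have : x^p ∈ B (j+k) := by
            rw [hmem]
            refine ⟨?_, H.pow_mem hx.2 _⟩
            rw [← pow_mul, ← pow_succ']; exact hx.1
          rw [ih, hmem] at this
          refine ⟨?_, hx.2⟩
          rw [pow_succ', pow_mul]; exact this.1
        · rw [← ih]; exact hmono _
    refine ⟨(B j : Set A).ncard, ?_⟩
    apply tendsto_const_nhds.congr'
    filter_upwards [eventually_ge_atTop j] with k hk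
    obtain ⟨r, rfl⟩ := Nat.exists_eq_add_of_le hk
    simp [hall r]
  · push Not at h
    have hdvd : ∀ j, p^j ∣ Nat.card (B j) := by
      intro j
      induction j with
      | zero => simp
      | succ j ih =>
        have hc := Subgroup.card_mul_index ((B j).subgroupOf (B (j+1)))
        have hc2 : Nat.card ((B j).subgroupOf (B (j+1))) = Nat.card (B j) :=
          Nat.card_congr (Subgroup.subgroupOfEquivOfLe (hmono j)).toEquiv
        rw [← hc, hc2, pow_succ]
        refine mul_dvd_mul ih ?_
        have hpg : IsPGroup p (B (j+1)) := by
          intro x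
          exact ⟨j+1, by ext; simpa using ((hmem _ _).1 x.2).1⟩
        obtain ⟨n, hn⟩ := hpg.index ((B j).subgroupOf (B (j+1)))
        rw [hn]
        rcases n with _ | n
        · exfalso
          rw [pow_zero, Subgroup.index_eq_one, Subgroup.subgroupOf_eq_top] at hn
          exact h j (le_antisymm hn (hmono j))
        · exact dvd_pow_self _ (by omega)
    refine ⟨0, ?_⟩
    rw [Int.cast_zero, tendsto_zero_iff_norm_tendsto_zero]
    refine squeeze_zero (fun _ => norm_nonneg _) (g := fun j => ((p:ℝ)⁻¹)^j) ?_ ?_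
    · intro j
      have := (PadicInt.norm_int_le_pow_iff_dvd (p := p) (k := (Nat.card (B j) : ℤ)) (n := j)).2 (by exact_mod_cast hdvd j)
      show ‖(((B j : Set A).ncard : ℕ) : ℤ_[p])‖ ≤ _
      rw [← Nat.card_coe_set_eq]
      simpa [zpow_neg] using this
    · apply tendsto_pow_atTop_nhds_zero_of_lt_one (by positivity)
      apply inv_lt_one_of_one_lt₀
      exact_mod_cast hp.out.one_lt

theorem conv_cos {A : Type*} [CommGroup A] (p : ℕ) [hp : Fact p.Prime]
    (hA : ∀ x : A, ∃ n : ℕ, x^(p^n) = 1)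
    (hfin : ∀ n : ℕ, {x : A | x^(p^n) = 1}.Finite) {C : Set A} (hC : IsCos C) :
    ConvZ p (fun j => ({x : A | x^(p^j) = 1} ∩ C).ncard) := by
  rcases hC with rfl | ⟨x, H, rfl⟩
  · exact ⟨0, by simp⟩
  · obtain ⟨z, hz⟩ := conv_subgroup p hfin H
    refine ⟨z, hz.congr' ?_⟩
    obtain ⟨n, hn⟩ := hA x
    filter_upwards [eventually_ge_atTop n] with j hj
    congr 1
    have hxj : x^(p^j) = 1 := by
      obtain ⟨r, rfl⟩ := Nat.exists_eq_add_of_le hj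
      rw [pow_add, pow_mul, hn, one_pow]
    rw [← Set.ncard_image_of_injective _ (mul_right_injective x)]
    congr 1
    ext y
    simp only [Set.mem_image, Set.mem_inter_iff, Set.mem_ofPred_eq, SetLike.mem_coe]
    constructor
    · rintro ⟨w, ⟨h1, h2⟩, rfl⟩
      exact ⟨by rw [mul_pow, hxj, h1, one_mul], by simpa using h2⟩
    · rintro ⟨h1, h2⟩
      exact ⟨x⁻¹ * y, ⟨by rw [mul_pow, inv_pow, hxj, h1]; simp, h2⟩, by simp⟩

theorem conv_union {A : Type*} [CommGroup A] (p : ℕ) [hp : Fact p.Prime]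
    (hA : ∀ x : A, ∃ n : ℕ, x^(p^n) = 1)
    (hfin : ∀ n : ℕ, {x : A | x^(p^n) = 1}.Finite) {ι : Type*} (s : Finset ι) :
    ∀ f : ι → Set A, (∀ i ∈ s, IsCos (f i)) →
    ConvZ p (fun j => ({x : A | x^(p^j) = 1} ∩ ⋃ i ∈ s, f i).ncard) := by
  classical
  induction s using Finset.induction_on with
  | empty => intro f _; exact ⟨0, by simp⟩
  | insert i s hi ih =>
    intro f hf
    obtain ⟨z1, h1⟩ := conv_cos p hA hfin (hf i (by simp))
    obtain ⟨z2, h2⟩ := ih f (fun k hk => hf k (by simp [hk]))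
    obtain ⟨z3, h3⟩ := ih (fun k => f i ∩ f k) (fun k hk => (hf i (by simp)).inter (hf k (by simp [hk])))
    refine ⟨z1 + z2 - z3, ?_⟩
    push_cast
    refine ((h1.add h2).sub h3).congr ?_
    intro j
    have := Set.ncard_union_add_ncard_inter ({x : A | x^(p^j) = 1} ∩ f i) ({x : A | x^(p^j) = 1} ∩ ⋃ i ∈ s, f i)
      ((hfin j).subset Set.inter_subset_left) ((hfin j).subset Set.inter_subset_left)
    rw [← Set.inter_union_distrib_left, ← Set.inter_inter_distrib_left, Set.inter_iUnion₂, ← Finset.set_biUnion_insert] at this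
    rw [sub_eq_iff_eq_add]
    exact_mod_cast this.symm

theorem FinU.conv {A : Type*} [CommGroup A] (p : ℕ) [hp : Fact p.Prime]
    (hA : ∀ x : A, ∃ n : ℕ, x^(p^n) = 1)
    (hfin : ∀ n : ℕ, {x : A | x^(p^n) = 1}.Finite) {Y : Set A} (hY : FinU Y) (E : Subgroup A) :
    ConvZ p (fun j => ({x : A | x^(p^j) = 1} ∩ (Y ∩ E)).ncard) := by
  obtain ⟨s, hs, rfl⟩ := hY
  have := conv_union p hA hfin s (fun C => C ∩ E) (fun C hC => (hs C hC).inter (Or.inr ⟨1, E, by simp⟩))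
  simp only [Set.iUnion_inter]
  exact this

theorem main_ind {A : Type*} [CommGroup A] (p : ℕ) [hp : Fact p.Prime]
    (hA : ∀ x : A, ∃ n : ℕ, x^(p^n) = 1) (hfin : ∀ n : ℕ, {x : A | x^(p^n) = 1}.Finite)
    {ι : Type*} [PartialOrder ι] [WellFoundedGT ι] (Z : ι → Set A)
    (h1 : ∀ j ε, ∃ j', j ≤ j' ∧ Z j' = {x | x ∈ Z j ∧ ε * x ∈ Z j})
    (h2 : ∀ j, ∃ m : ℕ, ∀ x ∈ Z j, ∀ s ≥ m, ∃ w, ¬ p ∣ w ∧ x^(1 + p^s*w) ∈ Z j) (j : ι) :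
    FinU (Z j) := by
  induction j using WellFoundedGT.induction with
  | _ j ih =>
  obtain ⟨m, hm⟩ := h2 j
  let H : Subgroup A :=
    { carrier := {a | ∀ x ∈ Z j, a * x ∈ Z j}
      one_mem' := by intro x hx; simpa using hx
      mul_mem' := by
        intro a b ha hb x hx
        rw [mul_assoc]; exact ha _ (hb _ hx)
      inv_mem' := by
        intro a ha x hx
        obtain ⟨n, hn⟩ := hA a
        have hk : ∀ k : ℕ, a^k * x ∈ Z j := by
          intro k
          induction k with
          | zero => simpa using hx
          | succ k ihk => rw [pow_succ', mul_assoc]; exact ha _ ihk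
        have hpos : 0 < p^n := pow_pos hp.out.pos n
        have : a⁻¹ = a^(p^n-1) := by
          rw [inv_eq_iff_mul_eq_one, ← pow_succ', Nat.sub_add_cancel hpos, hn]
        rw [this]; exact hk _ }
  have hH : ∀ a, a ∈ H ↔ ∀ x ∈ Z j, a * x ∈ Z j := fun a => Iff.rfl
  have hq : ∀ (m : ℕ) (x : A), x^(p^m) ∈ H ↔ (x : A ⧸ H) ∈ {b : A ⧸ H | b^(p^m) = 1} := by
    intro m x
    rw [Set.mem_ofPred_eq, ← QuotientGroup.mk_pow, QuotientGroup.eq_one_iff]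
  -- the two families
  let F1 : Set (Set A) := (fun b : A ⧸ H => {x | x ∈ Z j ∧ (x : A ⧸ H) = b}) '' {b : A ⧸ H | b^(p^m) = 1}
  let g : A → Set A := fun ε => {x | x ∈ Z j ∧ ε * x ∈ Z j}
  have hg : ∀ a b : A, (a : A ⧸ H) = b → g a ⊆ g b := by
    rintro a b hab x ⟨hx, hax⟩
    refine ⟨hx, ?_⟩
    have := (hH _).1 (QuotientGroup.eq.1 hab) _ hax
    convert this using 1
    rw [mul_comm a⁻¹ b, mul_assoc, inv_mul_cancel_left]
  let F2 : Set (Set A) := g '' {ε | ε ∉ H ∧ ε^p ∈ H}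
  have hF1 : F1.Finite := (quot_tors_finite p hA hfin H m).image _
  have hF2 : F2.Finite := by
    refine ((quot_tors_finite p hA hfin H 1).image (fun b : A ⧸ H => g (Quotient.out b))).subset ?_
    rintro _ ⟨ε, ⟨-, hε⟩, rfl⟩
    refine ⟨(ε : A ⧸ H), (hq 1 ε).1 (by simpa using hε), ?_⟩
    have : ((Quotient.out (ε : A ⧸ H) : A) : A ⧸ H) = ε := QuotientGroup.out_eq' _
    exact Set.Subset.antisymm (hg _ _ this) (hg _ _ this.symm)
  have hZ : Z j = ⋃₀ (F1 ∪ F2) := by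
    apply Set.Subset.antisymm
    · intro x hx
      by_cases hxm : x^(p^m) ∈ H
      · exact ⟨_, Or.inl ⟨(x : A ⧸ H), (hq m x).1 hxm, rfl⟩, hx, rfl⟩
      · have hex : ∃ n, x^(p^n) ∈ H := by
          obtain ⟨n, hn⟩ := hA x
          exact ⟨n, by rw [hn]; exact H.one_mem⟩
        classical
        have hn := Nat.find_spec hex
        have hmin := fun k => Nat.find_min hex (m := k)
        set n := Nat.find hex with hndef
        have hmn : m < n := by
          by_contra hcon
          obtain ⟨r, hr⟩ := Nat.exists_eq_add_of_le (not_lt.1 hcon)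
          apply hxm
          rw [hr, pow_add, pow_mul]
          exact H.pow_mem hn _
        obtain ⟨s, hs⟩ : ∃ s, n = s + 1 := ⟨n - 1, by omega⟩
        obtain ⟨w, hw, hxw⟩ := hm x hx s (by omega)
        refine ⟨g (x^(p^s*w)), Or.inr ⟨_, ⟨?_, ?_⟩, rfl⟩, hx, ?_⟩
        · intro hc
          apply hmin s (by omega)
          have hcop : IsCoprime (w : ℤ) (p : ℤ) :=
            Nat.isCoprime_iff_coprime.2 ((Nat.Prime.coprime_iff_not_dvd hp.out).2 hw).symm
          obtain ⟨u, v, huv⟩ := hcop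
          have e : x^(p^s) = (x^(p^s*w))^u * (x^(p^n))^v := by
            rw [hs, pow_succ, pow_mul, pow_mul, ← zpow_natCast (x^(p^s)) w, ← zpow_natCast (x^(p^s)) p,
              ← zpow_mul, ← zpow_mul, ← zpow_add, mul_comm (w:ℤ), mul_comm (p:ℤ), huv, zpow_one]
          rw [e]
          exact H.mul_mem (H.zpow_mem hc _) (H.zpow_mem hn _)
        · have : (x^(p^s*w))^p = (x^(p^n))^w := by
            rw [← pow_mul, ← pow_mul, hs]; congr 1; ring
          rw [this]; exact H.pow_mem hn _
        · rw [← pow_succ, add_comm]; exact hxw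
    · rintro x ⟨Y, (⟨b, -, rfl⟩ | ⟨ε, -, rfl⟩), hx⟩
      · exact hx.1
      · exact hx.1
  rw [hZ]
  apply FinU.iUnion (hF1.union hF2)
  rintro Y (⟨b, -, rfl⟩ | ⟨ε, ⟨hε, -⟩, rfl⟩)
  · apply FinU.of_isCos
    by_cases hne : ∃ x, x ∈ Z j ∧ (x : A ⧸ H) = b
    · obtain ⟨x, hx, rfl⟩ := hne
      refine Or.inr ⟨x, H, ?_⟩
      ext y
      simp only [Set.mem_ofPred_eq]
      constructor
      · rintro ⟨-, h⟩
        exact QuotientGroup.eq.1 h.symm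
      · intro h
        refine ⟨?_, (QuotientGroup.eq.2 h).symm⟩
        have := (hH _).1 h x hx
        rwa [mul_comm, mul_inv_cancel_left] at this
    · left
      ext y
      simp only [Set.mem_ofPred_eq, Set.mem_empty_iff_false, iff_false]
      exact fun h => hne ⟨y, h⟩
  · obtain ⟨j', hj, hj'⟩ := h1 j ε
    change FinU {x | x ∈ Z j ∧ ε * x ∈ Z j}
    rw [← hj']
    apply ih
    refine lt_of_le_of_ne hj ?_
    rintro rfl
    apply hε
    rw [hH]
    intro x hx
    rw [hj'] at hx
    exact hx.2

theorem gal_exists {F L : Type*} [Field F] [Field L] [Algebra F L] [IsGalois F L] [IsAlgClosed L]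
    (p : ℕ) [hp : Fact p.Prime] (hpL : (p : L) ≠ 0)
    (hfin : ∀ M : IntermediateField F L, FiniteDimensional F M →
      {x : L | x ∈ M ∧ ∃ n : ℕ, x^(p^n) = 1}.Finite)
    (C : Set L) (hC : C.Finite) :
    ∃ m : ℕ, ∀ s ≥ m, ∀ n : ℕ, ∃ σ : L ≃+* L, (∀ c ∈ C, σ c = c) ∧
      ∃ w : ℕ, ¬ p ∣ w ∧ ∀ x : L, x^(p^n) = 1 → σ x = x^(1 + p^s*w) := by
  classical
  have hroots : ∀ n : ℕ, {x : L | x^(p^n) = 1}.Finite := by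
    intro n
    refine ((Polynomial.nthRoots (p^n) (1:L)).toFinset.finite_toSet).subset ?_
    intro x hx
    simpa [Polynomial.mem_nthRoots (pow_pos hp.out.pos n)] using hx
  have hprim : ∀ n : ℕ, ∃ ζ : L, IsPrimitiveRoot ζ (p^n) := by
    intro n
    have : NeZero ((p^n : ℕ) : L) := ⟨by push_cast; exact pow_ne_zero _ hpL⟩
    exact HasEnoughRootsOfUnity.exists_primitiveRoot L (p^n)
  let D := C ∪ {x : L | x^(p^2) = 1}
  have hD : D.Finite := hC.union (hroots 2)
  have : Finite D := hD.to_subtype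
  let M := IntermediateField.adjoin F D
  have hMfd : FiniteDimensional F M :=
    IntermediateField.finiteDimensional_adjoin (fun x _ => Algebra.IsIntegral.isIntegral x)
  have hM := hfin M hMfd
  have hnot : ∃ n, ∃ ζ : L, ζ^(p^n) = 1 ∧ ζ ∉ M := by
    by_contra hcon
    push Not at hcon
    obtain ⟨ζ, hζ⟩ := hprim ({x : L | x ∈ M ∧ ∃ n : ℕ, x^(p^n) = 1}.ncard)
    set N := {x : L | x ∈ M ∧ ∃ n : ℕ, x^(p^n) = 1}.ncard with hN
    have hsub : (((Finset.range (p^N)).image (fun i => ζ^i) : Finset L) : Set L) ⊆ {x : L | x ∈ M ∧ ∃ n : ℕ, x^(p^n) = 1} := by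
      intro x hx
      simp only [Finset.coe_image, Set.mem_image] at hx
      obtain ⟨i, -, rfl⟩ := hx
      have : (ζ^i)^(p^N) = 1 := by rw [← pow_mul, mul_comm, pow_mul, hζ.pow_eq_one, one_pow]
      exact ⟨hcon N _ this, N, this⟩
    have hle := Set.ncard_le_ncard hsub hM
    rw [Set.ncard_coe_finset, Finset.card_image_of_injOn, Finset.card_range, ← hN] at hle
    · exact absurd hle (not_le.2 (Nat.lt_pow_self hp.out.one_lt))
    · intro a ha b hb hab
      exact hζ.pow_inj (by simpa using ha) (by simpa using hb) hab
  obtain ⟨n0, ζ0, hζ0, hζ0M⟩ := hnot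
  obtain ⟨σ, hσM, hσζ⟩ : ∃ σ : L ≃ₐ[F] L, (∀ x ∈ M, σ x = x) ∧ σ ζ0 ≠ ζ0 := by
    by_contra hcon
    push Not at hcon
    apply hζ0M
    rw [← InfiniteGalois.fixedField_fixingSubgroup M]
    rw [IntermediateField.mem_fixedField_iff]
    intro σ hσ
    exact hcon σ ((IntermediateField.mem_fixingSubgroup_iff M σ).1 hσ)
  have hσC : ∀ c ∈ C, σ c = c := fun c hc => hσM c (IntermediateField.subset_adjoin F D (Or.inl hc))
  have hσ2 : ∀ x : L, x^(p^2) = 1 → σ x = x := fun c hc => hσM c (IntermediateField.subset_adjoin F D (Or.inr hc))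
  have hup : ∀ (a b : ℕ) (x : L), a ≤ b → x^(p^a) = 1 → x^(p^b) = 1 := by
    intro a b x hab hx
    obtain ⟨r, rfl⟩ := Nat.exists_eq_add_of_le hab
    rw [pow_add, pow_mul, hx, one_pow]
  have hex : ∃ k, ¬ ∀ x : L, x^(p^k) = 1 → σ x = x := ⟨n0, fun h => hσζ (h _ hζ0)⟩
  have hk := Nat.find_spec hex
  have hmin := fun k => Nat.find_min hex (m := k)
  set k := Nat.find hex
  have h2k : 2 < k := by
    by_contra hcon
    exact hk fun x hx => hσ2 x (hup _ _ x (not_lt.1 hcon) hx)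
  obtain ⟨m, hm⟩ : ∃ m, k = m + 1 := ⟨k-1, by omega⟩
  have hfix : ∀ x : L, x^(p^m) = 1 → σ x = x := not_not.1 (hmin m (by omega))
  refine ⟨m, fun s hs n => ?_⟩
  let n' := n + m + 1
  obtain ⟨ζ, hζ⟩ := hprim n'
  have : NeZero (p^n') := ⟨(pow_pos hp.out.pos _).ne'⟩
  have hact : ∃ u : ℕ, 1 ≤ u ∧ σ ζ = ζ^u := by
    obtain ⟨i, -, hi⟩ := hζ.eq_pow_of_pow_eq_one (ξ := σ ζ) (by rw [← map_pow, hζ.pow_eq_one, map_one])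
    refine ⟨i + p^n', by have := NeZero.pos (p^n'); omega, ?_⟩
    rw [pow_add, hζ.pow_eq_one, mul_one, hi]
  obtain ⟨u, hu1, hu⟩ := hact
  have hall : ∀ x : L, x^(p^n') = 1 → σ x = x^u := by
    intro x hx
    obtain ⟨i, -, rfl⟩ := hζ.eq_pow_of_pow_eq_one hx
    rw [map_pow, hu, ← pow_mul, ← pow_mul, mul_comm]
  obtain ⟨v, rfl⟩ := Nat.exists_eq_add_of_le hu1
  have hdv : p^m ∣ v := by
    have h1 : IsPrimitiveRoot (ζ^(p^(n+1))) (p^m) :=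
      hζ.pow (NeZero.pos _) (by rw [← pow_add]; congr 1; omega)
    have h3 := hall (ζ^(p^(n+1))) (by rw [← pow_mul, mul_comm, pow_mul, hζ.pow_eq_one, one_pow])
    rw [hfix _ h1.pow_eq_one, pow_add _ 1 v, pow_one] at h3
    have h4 : (ζ^(p^(n+1)))^v = 1 := by
      have hne : ζ^(p^(n+1)) ≠ 0 := h1.ne_zero (pow_pos hp.out.pos _).ne'
      exact (mul_eq_left₀ hne).1 h3.symm
    exact h1.dvd_of_pow_eq_one v h4
  obtain ⟨w, rfl⟩ := hdv
  have hw : ¬ p ∣ w := by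
    rintro ⟨w', rfl⟩
    apply hk
    intro x hx
    rw [hm] at hx
    rw [hall x (hup _ _ x (by omega) hx), ← mul_assoc, ← pow_succ, pow_add, pow_mul x, hx, one_pow, pow_one, mul_one]
  obtain ⟨i, rfl⟩ := Nat.exists_eq_add_of_le hs
  obtain ⟨w', hw', hlt⟩ := lte p m w (by omega) hw i
  have hit : ∀ r : ℕ, ((∀ c ∈ C, (σ^r) c = c) ∧ ∀ x : L, x^(p^n') = 1 → (σ^r) x = x^((1+p^m*w)^r)) := by
    intro r
    induction r with
    | zero => simp
    | succ r ihr =>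
      refine ⟨fun c hc => ?_, fun x hx => ?_⟩
      · rw [pow_succ, AlgEquiv.mul_apply, hσC c hc, ihr.1 c hc]
      · rw [pow_succ, AlgEquiv.mul_apply, hall x hx, map_pow, ihr.2 x hx, ← pow_mul, pow_succ]
  refine ⟨(σ^(p^i)).toRingEquiv, (hit _).1, w', hw', fun x hx => ?_⟩
  rw [← hlt]
  exact (hit _).2 x (hup _ _ x (by omega) hx)

theorem rat_fin {L : Type*} [Field L] [Algebra ℚ L] (p : ℕ) [hp : Fact p.Prime]
    (M : IntermediateField ℚ L) (hM : FiniteDimensional ℚ M) :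
    {x : L | x ∈ M ∧ ∃ n : ℕ, x^(p^n) = 1}.Finite := by
  have : NumberField M := { to_charZero := inferInstance, to_finiteDimensional := by convert hM using 1; exact Subsingleton.elim _ _ }
  refine ((NumberField.Embeddings.finite_of_norm_le M ℂ 1).image (fun x : M => (x : L))).subset ?_
  rintro x ⟨hx, n, hn⟩
  have hn' : (⟨x, hx⟩ : M)^(p^n) = 1 := Subtype.ext hn
  refine ⟨⟨x, hx⟩, ⟨?_, ?_⟩, rfl⟩
  · exact IsIntegral.of_pow (pow_pos hp.out.pos n) (by rw [hn']; exact isIntegral_one)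
  · intro φ
    exact (Complex.norm_eq_one_of_pow_eq_one (by rw [← map_pow, hn', map_one]) (pow_pos hp.out.pos n).ne').le

theorem zmod_fin {L : Type*} [Field L] (l : ℕ) [Fact l.Prime] [Algebra (ZMod l) L] (p : ℕ)
    (M : IntermediateField (ZMod l) L) (hM : FiniteDimensional (ZMod l) M) :
    {x : L | x ∈ M ∧ ∃ n : ℕ, x^(p^n) = 1}.Finite := by
  have : Finite M := Module.finite_of_finite (ZMod l)
  exact (Set.toFinite (M : Set L)).subset fun x hx => hx.1

/-- descent to the algebraic closure of the prime field -/
theorem lemmaG_aux {F K : Type*} [Field F] [PerfectField F] [Field K] [Algebra F K] [IsAlgClosed K]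
    (p : ℕ) [hp : Fact p.Prime] (hpK : (p : K) ≠ 0)
    (hfin : ∀ M : IntermediateField F (algebraicClosure F K), FiniteDimensional F M →
      {x : algebraicClosure F K | x ∈ M ∧ ∃ n : ℕ, x^(p^n) = 1}.Finite)
    (d : ℕ) (S : Set (MvPolynomial (Fin d) K)) (hS : S.Finite) :
    ∃ m : ℕ, ∀ x : Fin d → K, (∃ n : ℕ, ∀ i, x i^(p^n) = 1) → (∀ f ∈ S, MvPolynomial.eval x f = 0) →
      ∀ s ≥ m, ∃ w, ¬ p ∣ w ∧ ∀ f ∈ S, MvPolynomial.eval (fun i => x i^(1 + p^s*w)) f = 0 := by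
  have hac : IsAlgClosed (algebraicClosure F K) := (algebraicClosure.isAlgClosure F K).isAlgClosed
  have halg : Algebra.IsAlgebraic F (algebraicClosure F K) := algebraicClosure.isAlgebraic F K
  have hnor : Normal F (algebraicClosure F K) := IsAlgClosure.normal F _
  have hgal : IsGalois F (algebraicClosure F K) := IsGalois.mk
  generalize hL : algebraicClosure F K = L at *
  have hpL : (p : L) ≠ 0 := by
    intro h; apply hpK
    simpa using congrArg (algebraMap L K) h
  let b := Module.Basis.ofVectorSpace L K
  let C : Set L := ⋃ f ∈ S, ⋃ α ∈ f.support, Set.range (b.repr (f.coeff α))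
  have hC : C.Finite := by
    refine hS.biUnion fun f _ => f.support.finite_toSet.biUnion fun α _ => ?_
    exact Finsupp.finite_range _
  obtain ⟨m, hm⟩ := gal_exists p hpL hfin C hC
  refine ⟨m, fun x ⟨n, hn⟩ hx s hs => ?_⟩
  obtain ⟨σ, hσC, w, hw, hσ⟩ := hm s hs n
  refine ⟨w, hw, fun f hf => ?_⟩
  have hxL : ∀ i, ∃ y : L, (y : K) = x i := by
    intro i
    refine ⟨⟨x i, ?_⟩, rfl⟩
    rw [← hL, mem_algebraicClosure_iff]
    exact (IsIntegral.of_pow (pow_pos hp.out.pos n) (by rw [hn i]; exact isIntegral_one)).isAlgebraic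
  choose y hy using hxL
  have hyn : ∀ i, y i^(p^n) = 1 := by
    intro i
    apply Subtype.ext
    have := hn i
    rw [← hy] at this
    simpa using this
  have hev : ∀ (y : Fin d → L) (f : MvPolynomial (Fin d) K) i, b.repr (MvPolynomial.eval (fun i => (y i : K)) f) i
      = ∑ α ∈ f.support, b.repr (f.coeff α) i * ∏ t, y t ^ α t := by
    intro y f i
    rw [MvPolynomial.eval_eq', map_sum, Finsupp.finsetSum_apply]
    refine Finset.sum_congr rfl fun α _ => ?_
    have : MvPolynomial.coeff α f * ∏ t, (y t : K) ^ α t = (∏ t, y t ^ α t) • MvPolynomial.coeff α f := by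
      rw [Algebra.smul_def, mul_comm, map_prod]
      simp only [map_pow]
      rfl
    rw [this, map_smul, Finsupp.smul_apply, smul_eq_mul, mul_comm]
  have hx' : (fun i => x i^(1 + p^s*w)) = fun i => ((σ (y i) : L) : K) := by
    funext i
    rw [hσ _ (hyn i), ← hy]
    simp
  rw [hx']
  apply b.repr.injective
  rw [map_zero]
  ext i
  rw [hev (fun i => σ (y i))]
  have h0 := hx f hf
  have hxy : x = fun i => (y i : K) := by funext i; rw [hy]
  rw [hxy] at h0
  have h1 := hev y f i
  rw [h0, map_zero] at h1
  have h2 := congrArg σ h1.symm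
  rw [Finsupp.zero_apply, map_zero, map_sum] at h2
  rw [Finsupp.zero_apply, ← h2]
  refine congrArg Subtype.val (Finset.sum_congr rfl fun α hα => ?_)
  rw [map_mul, map_prod, hσC]
  · simp only [map_pow]
  · simp only [C, Set.mem_iUnion]
    exact ⟨f, hf, α, hα, i, rfl⟩

theorem lemmaG {K : Type*} [Field K] [IsAlgClosed K]
    (p : ℕ) [hp : Fact p.Prime] 
    (d : ℕ) (S : Set (MvPolynomial (Fin d) K)) (hS : S.Finite) :
    ∃ m : ℕ, ∀ x : Fin d → K, (∃ n : ℕ, ∀ i, x i^(p^n) = 1) → (∀ f ∈ S, MvPolynomial.eval x f = 0) →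
      ∀ s ≥ m, ∃ w, ¬ p ∣ w ∧ ∀ f ∈ S, MvPolynomial.eval (fun i => x i^(1 + p^s*w)) f = 0 := by
  by_cases hpK : (p : K) = 0
  · have : CharP K p := (CharP.charP_iff_prime_eq_zero hp.out).2 hpK
    refine ⟨0, fun x ⟨n, hn⟩ hx s _ => ⟨1, hp.out.one_lt.not_ge ∘ Nat.le_of_dvd one_pos, ?_⟩⟩
    have : ∀ i, x i = 1 := by
      intro i
      have := hn i
      have h2 : (x i - 1)^(p^n) = 0 := by rw [sub_pow_char_pow, this]; simp
      exact sub_eq_zero.1 (pow_eq_zero_iff (pow_pos hp.out.pos n).ne' |>.1 h2)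
    have e : (fun i => x i ^ (1 + p^s*1)) = x := by funext i; rw [this i, one_pow]
    rw [e]; exact hx
  · rcases CharP.exists K with ⟨l, hl⟩
    rcases CharP.char_is_prime_or_zero K l with h | rfl
    · have : Fact l.Prime := ⟨h⟩
      let _ : Algebra (ZMod l) K := ZMod.algebra K l
      exact lemmaG_aux (F := ZMod l) p hpK (fun M hM => zmod_fin l p M hM) d S hS
    · have : CharZero K := CharP.charP_to_charZero K
      exact lemmaG_aux (F := ℚ) p hpK (fun M hM => rat_fin p M hM) d S hS

/-- The `p`-primary torsion of the torus. -/
def pTors (p d : ℕ) (K : Type*) [Field K] : Subgroup (Fin d → Kˣ) where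
  carrier := {x | ∃ n : ℕ, x^(p^n) = 1}
  one_mem' := ⟨0, by simp⟩
  mul_mem' := by
    rintro a b ⟨n, hn⟩ ⟨m, hm⟩
    refine ⟨n + m, ?_⟩
    rw [mul_pow, pow_add, pow_mul, hn, one_pow, mul_comm (p^n), pow_mul, hm, one_pow, one_mul]
  inv_mem' := by
    rintro a ⟨n, hn⟩
    exact ⟨n, by rw [inv_pow, hn, inv_one]⟩

/-- Let `K` be an algebraically closed field, `d ≥ 1`, `V ⊆ (Kˣ)^d` a Zariski closed
subset and `E ⊆ (Kˣ)^d` a subgroup.  The number `a j` of points of `μ(p^j)^d` lying in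
`V ∩ E` converges `p`-adically to an integer as `j → ∞`. -/
theorem padic_limit_count_roots_of_unity_in_variety (p : ℕ) (hp : Fact p.Prime)
    (K : Type*) [Field K] [IsAlgClosed K] (d : ℕ) (hd : 1 ≤ d)
    (S : Set (MvPolynomial (Fin d) K))
    (V : Set (Fin d → Kˣ))
    (hV : V = {ζ : Fin d → Kˣ | ∀ f ∈ S, MvPolynomial.eval (fun i => (ζ i : K)) f = 0})
    (E : Subgroup (Fin d → Kˣ))
    (a : ℕ → ℕ)
    (ha : ∀ j, a j =
      ({ζ : Fin d → Kˣ | ∀ t, ζ t ^ (p ^ j) = 1} ∩ V ∩ (E : Set (Fin d → Kˣ))).ncard) :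
    ∃ z : ℤ, Tendsto (fun j => (a j : ℤ_[p])) atTop (nhds ((z : ℤ_[p]))) := by
  have _ := hd
  let T : Subgroup (Fin d → Kˣ) := pTors p d K
  have hT : ∀ x, x ∈ T ↔ ∃ n : ℕ, x^(p^n) = 1 := fun x => Iff.rfl
  have hA : ∀ x : T, ∃ n : ℕ, x^(p^n) = 1 := by
    rintro ⟨x, n, hn⟩
    exact ⟨n, Subtype.ext hn⟩
  have hfin : ∀ n : ℕ, {x : T | x^(p^n) = 1}.Finite := by
    intro n
    have : NeZero (p^n) := ⟨(pow_pos hp.out.pos _).ne'⟩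
    have h1 : {u : Kˣ | u^(p^n) = 1}.Finite :=
      (Set.finite_coe_iff.1 (inferInstanceAs (Finite (rootsOfUnity (p^n) K)))).subset
        fun u hu => (mem_rootsOfUnity _ _).2 hu
    have h2 : {x : Fin d → Kˣ | ∀ t, x t ∈ {u : Kˣ | u^(p^n) = 1}}.Finite := Set.Finite.pi' fun _ => h1
    refine Set.Finite.of_finite_image (f := Subtype.val) (h2.subset ?_) Subtype.val_injective.injOn
    rintro _ ⟨x, hx, rfl⟩ t
    exact congrFun (congrArg Subtype.val hx) t
  let Z : Ideal (MvPolynomial (Fin d) K) → Set T :=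
    fun J => {x | ∀ f ∈ J, MvPolynomial.eval (fun i => ((x.1 i : Kˣ) : K)) f = 0}
  have hFU : FinU (Z (Ideal.span S)) := by
    apply main_ind p hA hfin
    · intro J ε
      let φ : MvPolynomial (Fin d) K →ₐ[K] MvPolynomial (Fin d) K :=
        MvPolynomial.aeval (fun i => MvPolynomial.C ((ε.1 i : Kˣ) : K) * MvPolynomial.X i)
      have hφ : ∀ (x : T) f, MvPolynomial.eval (fun i => ((x.1 i : Kˣ) : K)) (φ f) =
          MvPolynomial.eval (fun i => (((ε * x).1 i : Kˣ) : K)) f := by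
        intro x f
        have : ((MvPolynomial.eval (fun i => ((x.1 i : Kˣ) : K))).comp φ.toRingHom) =
            MvPolynomial.eval (fun i => (((ε * x).1 i : Kˣ) : K)) := by
          apply MvPolynomial.ringHom_ext
          · intro r; simp [φ]
          · intro i; simp [φ]
        exact congrArg (fun g => g f) this
      refine ⟨J ⊔ J.map φ, le_sup_left, ?_⟩
      ext x
      constructor
      · intro hx
        refine ⟨fun f hf => hx f (Ideal.mem_sup_left hf), fun f hf => ?_⟩
        rw [← hφ]
        exact hx _ (Ideal.mem_sup_right (Ideal.mem_map_of_mem φ hf))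
      · rintro ⟨h1, h2⟩
        have : J ⊔ J.map φ ≤ RingHom.ker (MvPolynomial.eval (fun i => ((x.1 i : Kˣ) : K))) := by
          refine sup_le (fun f hf => h1 f hf) ?_
          rw [Ideal.map_le_iff_le_comap]
          intro f hf
          rw [Ideal.mem_comap, RingHom.mem_ker, hφ]
          exact h2 f hf
        exact fun f hf => this hf
    · intro J
      obtain ⟨s, hs⟩ := (isNoetherianRing_iff_ideal_fg _).1 inferInstance J
      obtain ⟨m, hm⟩ := lemmaG p d (s : Set (MvPolynomial (Fin d) K)) s.finite_toSet
      have hJ : ∀ y : Fin d → K, (∀ f ∈ (s : Set (MvPolynomial (Fin d) K)), MvPolynomial.eval y f = 0) →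
          ∀ f ∈ J, MvPolynomial.eval y f = 0 := by
        intro y h
        have : J ≤ RingHom.ker (MvPolynomial.eval y) := by
          rw [← hs, Ideal.span_le]
          exact fun f hf => h f hf
        exact fun f hf => this hf
      refine ⟨m, fun x hx r hr => ?_⟩
      obtain ⟨n, hn⟩ := hA x
      obtain ⟨w, hw, h⟩ := hm (fun i => ((x.1 i : Kˣ) : K)) ⟨n, fun i => by
        have : x.1 i ^ (p^n) = 1 := congrFun (congrArg Subtype.val hn) i
        rw [← Units.val_pow_eq_pow_val, this, Units.val_one]⟩
        (fun f hf => hx f (by rw [← hs]; exact Ideal.subset_span hf)) r hr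
      refine ⟨w, hw, ?_⟩
      have := hJ _ h
      intro f hf
      rw [← this f hf]
      congr 2
  obtain ⟨z, hz⟩ := hFU.conv p hA hfin (E.comap T.subtype)
  refine ⟨z, hz.congr fun j => ?_⟩
  rw [ha]
  congr 1
  beta_reduce
  rw [← Set.ncard_image_of_injective _ (Subtype.val_injective (p := fun x => x ∈ T))]
  congr 1
  have hZV : ∀ x : T, x ∈ Z (Ideal.span S) ↔ x.1 ∈ V := by
    intro x
    rw [hV]
    constructor
    · intro h f hf
      exact h f (Ideal.subset_span hf)
    · intro h
      have : Ideal.span S ≤ RingHom.ker (MvPolynomial.eval (fun i => ((x.1 i : Kˣ) : K))) :=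
        Ideal.span_le.2 fun f hf => h f hf
      exact fun f hf => this hf
  ext y
  constructor
  · rintro ⟨x, ⟨h1, h2, h3⟩, rfl⟩
    exact ⟨⟨fun t => congrFun (congrArg Subtype.val h1) t, (hZV x).1 h2⟩, h3⟩
  · rintro ⟨⟨h1, h2⟩, h3⟩
    have hy : y^(p^j) = 1 := funext h1
    exact ⟨⟨y, j, hy⟩, ⟨Subtype.ext hy, (hZV _).2 h2, h3⟩, rfl⟩
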